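/- Let B ⊂ ℝ⁴ be open and f = (f⁴,f⁵,f⁶,f⁷): B → ℝ⁴ smooth, with graph tangent vectors v_j(x) and Fourier–Mukai curvature F_∇^S as in the context. Then the following are equivalent: (i) τ(v₀(x),v₁(x),v₂(x),v₃(x)) = 0 for every x ∈ B (i.e., the graph S is a Cayley submanifold with an appropriate orientation); (ii) π²₇( F_∇^S + (1/6)·*₈(F_∇^S)³ ) = 0 and π⁴₇( (F_∇^S)² ) = 0 at every point of B. -/

import Mathlib

/-!
Write `γ = ∑ a_{jb} dx^j ∧ dy^b` for the 2-form built from the derivative `a` of `f`, so that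
`F_∇^S = √-1 γ`. The value of `dx^I ∧ dy^J` on the graph frame is, up to sign, the minor of `a` with
rows `Iᶜ` and columns `J`, and that minor is, again up to sign, the coefficient of
`dx^{Iᶜ} ∧ dy^J` in `exp γ`. Hence evaluating a 4-form on the frame amounts to pairing its
Fourier–Mukai transform, a Hodge star along the `dx`-directions, with `exp γ`. This transform sends
`λ⁴(e^μ)` to `-λ⁴(e^μ)` if `e^μ` is one of the `dx^j`, and to a nonzero multiple of
`λ²(e^μ) - *₈ λ²(e^μ)` if it is one of the `dy^b`. The coordinates of `τ` are therefore, up to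
nonzero factors, the pairings of `γ²` with the first three `λ⁴(e^μ)` and those of `γ - *₈γ³/6` with
the last four `λ²(e^μ)`. The remaining coordinates of `π⁴₇(γ²)` and `π²₇(γ - *₈γ³/6)` vanish by
bidegree.
-/

open scoped BigOperators

noncomputable section

namespace FMpaper

variable {K : Type*} [NormedField K] [NormedAlgebra ℝ K]

/-- Coefficient model for the exterior algebra of `(ℝⁿ)*` with scalars in `K`:
a form is given by its coefficients on the basis `e^S`, `S ⊆ {0, …, n-1}` sorted. -/
abbrev Form (K : Type*) (n : ℕ) := Finset (Fin n) → K

variable {n : ℕ}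

/-- Sign such that `e^s ∧ e^t = signMerge s t • e^(s ∪ t)` for disjoint sorted `s, t`. -/
def signMerge (s t : Finset (Fin n)) : K :=
  (-1 : K) ^ (((s ×ˢ t).filter (fun p => p.2 < p.1)).card)

/-- Wedge product. -/
def wedge (α β : Form K n) : Form K n :=
  fun u => ∑ s ∈ u.powerset, signMerge s (u \ s) * α s * β (u \ s)

/-- Hodge star operator (for the standard inner product and orientation `e^{0⋯(n-1)}`). -/
def hstar (α : Form K n) : Form K n :=
  fun t => signMerge tᶜ t * α tᶜ

/-- Interior product with the basis vector `e_μ`. -/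
def iprodB (μ : Fin n) (α : Form K n) : Form K n :=
  fun t => if μ ∈ t then 0
    else (-1 : K) ^ ((t.filter (fun j => j < μ)).card) * α (insert μ t)

/-- Interior product with the vector `v`. -/
def iprod (v : Fin n → K) (α : Form K n) : Form K n :=
  fun t => ∑ μ, v μ * iprodB μ α t

/-- The basis covector `e^i` as a 1-form. -/
def e1 (i : Fin n) : Form K n := fun s => if s = {i} then 1 else 0

/-- The covector `v♭` dual to a vector `v`. -/
def flat (v : Fin n → K) : Form K n := ∑ i, v i • e1 i

/-- The vector `α♯` dual to a 1-form `α`. -/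
def sharp1 (α : Form K n) : Fin n → K := fun i => α {i}

/-- The inner product of forms (extended `K`-bilinearly). -/
def inner' (α β : Form K n) : K := ∑ s, α s * β s

/-- The (Euclidean) norm of a form; for an `√-1 ℝ`-valued form `√-1 γ` this is `‖γ‖`. -/
def fnorm (α : Form K n) : ℝ := Real.sqrt (∑ s, ‖α s‖ ^ 2)

/-- `α` is homogeneous of degree `k`. -/
def isGrade (k : ℕ) (α : Form K n) : Prop := ∀ s, s.card ≠ k → α s = 0

/-- Evaluation of a `k`-form on `k` vectors. -/
def evalForm {k : ℕ} (α : Form K n) (v : Fin k → (Fin n → K)) : K :=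
  ∑ s : Finset (Fin n), α s *
    (if h : s.card = k then
      Matrix.det (Matrix.of fun i j => v i ((s.orderIsoOfFin h j : Fin n))) else 0)

/-- The matrix of the skew-symmetric endomorphism `γ♯` associated with a 2-form `γ`
via `⟨γ♯ u, v⟩ = γ(u, v)`. -/
def mat2 (γ : Form K n) : Matrix (Fin n) (Fin n) K :=
  Matrix.of fun i j => if i < j then γ {i, j} else if j < i then - γ {i, j} else 0

/-- The standard `G₂` 3-form `φ = e^{123}+e^{145}+e^{167}+e^{246}−e^{257}−e^{347}−e^{356}`
on `ℝ⁷` (indices `1, …, 7` shifted to `0, …, 6`). -/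
def phi7 : Form K 7 := fun s =>
  if s = ({0, 1, 2} : Finset (Fin 7)) then 1
  else if s = ({0, 3, 4} : Finset (Fin 7)) then 1
  else if s = ({0, 5, 6} : Finset (Fin 7)) then 1
  else if s = ({1, 3, 5} : Finset (Fin 7)) then 1
  else if s = ({1, 4, 6} : Finset (Fin 7)) then -1
  else if s = ({2, 3, 6} : Finset (Fin 7)) then -1
  else if s = ({2, 4, 5} : Finset (Fin 7)) then -1
  else 0

/-- `*₇φ = e^{4567}+e^{2367}+e^{2345}+e^{1357}−e^{1346}−e^{1256}−e^{1247}` on `ℝ⁷`. -/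
def psi7 : Form K 7 := fun s =>
  if s = ({3, 4, 5, 6} : Finset (Fin 7)) then 1
  else if s = ({1, 2, 5, 6} : Finset (Fin 7)) then 1
  else if s = ({1, 2, 3, 4} : Finset (Fin 7)) then 1
  else if s = ({0, 2, 4, 6} : Finset (Fin 7)) then 1
  else if s = ({0, 2, 3, 5} : Finset (Fin 7)) then -1
  else if s = ({0, 1, 4, 5} : Finset (Fin 7)) then -1
  else if s = ({0, 1, 3, 6} : Finset (Fin 7)) then -1
  else 0

/-- The `G₂` 3-form `φ` on `V = span{e₁, …, e₇} ⊂ ℝ⁸`, regarded as a form on `ℝ⁸`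
annihilated by `i(e₀)` (indices `1, …, 7` of `ℝ⁸`). -/
def phi8 : Form K 8 := fun s =>
  if s = ({1, 2, 3} : Finset (Fin 8)) then 1
  else if s = ({1, 4, 5} : Finset (Fin 8)) then 1
  else if s = ({1, 6, 7} : Finset (Fin 8)) then 1
  else if s = ({2, 4, 6} : Finset (Fin 8)) then 1
  else if s = ({2, 5, 7} : Finset (Fin 8)) then -1
  else if s = ({3, 4, 7} : Finset (Fin 8)) then -1
  else if s = ({3, 5, 6} : Finset (Fin 8)) then -1
  else 0

/-- `*₇φ` on `V ⊂ ℝ⁸`, regarded as a 4-form on `ℝ⁸` annihilated by `i(e₀)`. -/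
def psi8 : Form K 8 := fun s =>
  if s = ({4, 5, 6, 7} : Finset (Fin 8)) then 1
  else if s = ({2, 3, 6, 7} : Finset (Fin 8)) then 1
  else if s = ({2, 3, 4, 5} : Finset (Fin 8)) then 1
  else if s = ({1, 3, 5, 7} : Finset (Fin 8)) then 1
  else if s = ({1, 3, 4, 6} : Finset (Fin 8)) then -1
  else if s = ({1, 2, 5, 6} : Finset (Fin 8)) then -1
  else if s = ({1, 2, 4, 7} : Finset (Fin 8)) then -1
  else 0

/-- The standard Cayley 4-form `Φ = e⁰ ∧ φ + *₇φ` on `ℝ⁸`. -/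
def Phi8 : Form K 8 := wedge (e1 0) phi8 + psi8

/-- The index set of `V = span{e₁, …, e₇} ⊂ ℝ⁸`. -/
def Vset : Finset (Fin 8) := {1, 2, 3, 4, 5, 6, 7}

/-- The Hodge star `*₇` of `V ⊂ ℝ⁸` (volume form `e^{1⋯7}`), acting on forms on `ℝ⁸`
annihilated by `i(e₀)`. -/
def star7 (α : Form K 8) : Form K 8 :=
  fun t => if (0 : Fin 8) ∈ t then 0 else signMerge (Vset \ t) t * α (Vset \ t)

/-- `α` is (the pullback of) a form on `V`, i.e. `i(e₀) α = 0`. -/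
def onV (α : Form K 8) : Prop := ∀ s, (0 : Fin 8) ∈ s → α s = 0

/-- `λ²(α) = ½ (e⁰ ∧ α + i(α♯) φ)` for `α ∈ V*`. -/
def lambda2 (α : Form K 8) : Form K 8 :=
  (2 : K)⁻¹ • (wedge (e1 0) α + iprod (sharp1 α) phi8)

/-- `λ⁴(α) = (1/√8) (e⁰ ∧ i(α♯) *₇φ − α ∧ φ)` for `α ∈ V*`. -/
def lambda4 (α : Form K 8) : Form K 8 :=
  (algebraMap ℝ K (Real.sqrt 8))⁻¹ • (wedge (e1 0) (iprod (sharp1 α) psi8) - wedge α phi8)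

/-- `λ⁶(α) = *₈ λ²(α)` for `α ∈ V*`. -/
def lambda6 (α : Form K 8) : Form K 8 := hstar (lambda2 α)

/-- The projection `π²₇(α) = (α + *₈(Φ ∧ α))/4` onto `Λ²₇`. -/
def pi27 (α : Form K 8) : Form K 8 := (4 : K)⁻¹ • (α + hstar (wedge Phi8 α))

/-- The projection `π⁴₇(β) = Σ_{μ=1}^{7} ⟨β, λ⁴(e^μ)⟩ λ⁴(e^μ)` onto `Λ⁴₇`. -/
def pi47 (β : Form K 8) : Form K 8 :=
  ∑ μ : Fin 7, inner' β (lambda4 (e1 μ.succ)) • lambda4 (e1 μ.succ)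

/-- `τ(u₀,u₁,u₂,u₃) = Σ_{μ=1}^{7} λ⁴(e^μ)(u₀,u₁,u₂,u₃) ⬝ λ⁴(e^μ) = π⁴₇(u₀♭∧u₁♭∧u₂♭∧u₃♭)`. -/
def tau4 (u : Fin 4 → (Fin 8 → K)) : Form K 8 :=
  ∑ μ : Fin 7, evalForm (lambda4 (e1 μ.succ)) u • lambda4 (e1 μ.succ)

/-- Partial derivative `∂f^a/∂x^j` at `x`. -/
def pd {m p : ℕ} (f : (Fin m → ℝ) → (Fin p → ℝ)) (x : Fin m → ℝ) (j : Fin m) (a : Fin p) : ℝ :=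
  fderiv ℝ f x (Pi.single j 1) a


/-! Graph setting for Cayley `T⁴`-fibrations: `ℝ⁸ = ℝ⁴ × ℝ⁴` with coordinates
`(x⁰,…,x³,y⁴,…,y⁷)`. -/

/-- The index of the coordinate `x^j` in `ℝ⁸`. -/
def xi (j : Fin 4) : Fin 8 := Fin.castAdd 4 j

/-- The index of the coordinate `y^a` (`a = 4,…,7` shifted to `0,…,3`) in `ℝ⁸`. -/
def yi (a : Fin 4) : Fin 8 := a.addNat 4

/-- The spanning tangent vectors `v_j = ∂_j + Σ_a (∂f^a/∂x^j) ∂_a` of the graph of `f`. -/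
def vG (f : (Fin 4 → ℝ) → (Fin 4 → ℝ)) (x : Fin 4 → ℝ) (j : Fin 4) : Fin 8 → ℝ :=
  Pi.single (xi j) 1 + ∑ a : Fin 4, pd f x j a • (Pi.single (yi a) 1 : Fin 8 → ℝ)

/-- The real 2-form `γ` with `F_∇^S = √-1 γ`, i.e. `γ = Σ_{j,a} (∂f^a/∂x^j) dx^j ∧ dy^a`. -/
def gammaS (f : (Fin 4 → ℝ) → (Fin 4 → ℝ)) (x : Fin 4 → ℝ) : Form ℝ 8 :=
  ∑ j : Fin 4, ∑ a : Fin 4, pd f x j a • wedge (e1 (xi j)) (e1 (yi a))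

/-- The `√-1 ℝ`-valued curvature 2-form
`F_∇^S = √-1 Σ_{j,a} (∂f^a/∂x^j) dx^j ∧ dy^a` of the real Fourier–Mukai transform. -/
def FS8 (f : (Fin 4 → ℝ) → (Fin 4 → ℝ)) (x : Fin 4 → ℝ) : Form ℂ 8 :=
  fun s => Complex.I * (gammaS f x s : ℂ)

variable {F : Type*} [NormedField F]

section MergeSign

/-- The sign `signMerge s t` as an integer. -/
def mergeSign (s t : Finset (Fin n)) : ℤ :=
  (-1) ^ (((s ×ˢ t).filter (fun p => p.2 < p.1)).card)

theorem intCast_mergeSign (s t : Finset (Fin n)) : ((mergeSign s t : ℤ) : F) = signMerge s t := by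
  simp [mergeSign, signMerge]

theorem signMerge_mul_self (s t : Finset (Fin n)) : (signMerge s t * signMerge s t : F) = 1 := by
  rw [signMerge, ← pow_add, Even.neg_one_pow ⟨_, rfl⟩]

theorem signMerge_mul_signMerge_swap {s t : Finset (Fin n)} (h : Disjoint s t) :
    (signMerge s t * signMerge t s : F) = (-1) ^ (s.card * t.card) := by
  have hswap : ((t ×ˢ s).filter (fun p => p.2 < p.1)).card =
      ((s ×ˢ t).filter (fun p => ¬ p.2 < p.1)).card := by
    refine Finset.card_nbij' Prod.swap Prod.swap ?_ ?_ (fun _ _ => rfl) (fun _ _ => rfl)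
    · rintro ⟨i, j⟩ hij
      simp only [Finset.coe_filter, Finset.mem_product, Set.mem_ofPred_eq] at hij ⊢
      exact ⟨hij.1.symm, hij.2.le.not_gt⟩
    · rintro ⟨i, j⟩ hij
      simp only [Finset.coe_filter, Finset.mem_product, Set.mem_ofPred_eq, not_lt] at hij ⊢
      exact ⟨hij.1.symm, hij.2.lt_of_ne (Finset.disjoint_left.1 h hij.1.1 <| · ▸ hij.1.2)⟩
  rw [signMerge, signMerge, ← pow_add, hswap, Finset.card_filter_add_card_filter_not,
    Finset.card_product]

end MergeSign

section Wedge

theorem wedge_smul_left (c : F) (α β : Form F n) : wedge (c • α) β = c • wedge α β := by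
  funext u
  simp only [wedge, Pi.smul_apply, smul_eq_mul, Finset.mul_sum]
  exact Finset.sum_congr rfl fun _ _ => by ring

theorem wedge_smul_right (c : F) (α β : Form F n) : wedge α (c • β) = c • wedge α β := by
  funext u
  simp only [wedge, Pi.smul_apply, smul_eq_mul, Finset.mul_sum]
  exact Finset.sum_congr rfl fun _ _ => by ring

theorem wedge_sum_left {ι : Type*} (t : Finset ι) (α : ι → Form F n) (β : Form F n) :
    wedge (∑ i ∈ t, α i) β = ∑ i ∈ t, wedge (α i) β := by
  funext u
  simp only [wedge, Finset.sum_apply, Finset.mul_sum, Finset.sum_mul]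
  exact Finset.sum_comm

theorem single_one_wedge_apply (s : Finset (Fin n)) (β : Form F n) (u : Finset (Fin n)) :
    wedge (Pi.single s 1) β u = if s ⊆ u then signMerge s (u \ s) * β (u \ s) else 0 := by
  simp [wedge, Pi.single_apply]

theorem wedge_single_empty (α : Form F n) : wedge α (Pi.single ∅ 1) = α := by
  funext u
  rw [wedge, Finset.sum_eq_single u]
  · simp [signMerge]
  · intro s hs hsu
    have : u \ s ≠ ∅ := fun h =>
      hsu ((Finset.mem_powerset.1 hs).antisymm (Finset.sdiff_eq_empty_iff_subset.1 h))
    simp [this]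
  · simp

theorem wedge_apply_eq_sum (α β : Form F n) (u : Finset (Fin n)) :
    wedge α β u = ∑ s, (if s ⊆ u then signMerge (u \ s) s * α (u \ s) else 0) * β s := by
  simp only [ite_mul, zero_mul, ← Finset.mem_powerset]
  rw [← Finset.sum_filter, Finset.filter_univ_mem, wedge]
  refine Finset.sum_nbij' (u \ ·) (u \ ·) ?_ ?_ ?_ ?_ ?_
  all_goals simp +contextual

theorem hstar_smul (c : F) (α : Form F n) : hstar (c • α) = c • hstar α := by
  funext u
  simp only [hstar, Pi.smul_apply, smul_eq_mul]
  ring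

theorem e1_eq_single (i : Fin n) : (e1 i : Form F n) = Pi.single {i} 1 := by
  funext s
  simp [e1, Pi.single_apply]

theorem single_wedge_single {s t : Finset (Fin n)} (h : Disjoint s t) :
    (wedge (Pi.single s 1) (Pi.single t 1) : Form F n) = Pi.single (s ∪ t) (signMerge s t) := by
  funext u
  rw [single_one_wedge_apply]
  by_cases hu : u = s ∪ t
  · simp [hu, Finset.union_sdiff_cancel_left h]
  · have : s ⊆ u → u \ s ≠ t := by
      rintro hsu rfl
      exact hu (Finset.union_sdiff_of_subset hsu).symm
    simp +contextual [hu, this]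

theorem iprod_sharp1_e1 (i : Fin n) (α : Form F n) : iprod (sharp1 (e1 i)) α = iprodB i α := by
  funext t
  simp [iprod, sharp1, e1]

end Wedge

section InnerProduct

theorem inner'_add_left (α α' β : Form F n) : inner' (α + α') β = inner' α β + inner' α' β := by
  simp only [inner', Pi.add_apply, add_mul, Finset.sum_add_distrib]

theorem inner'_smul_left (c : F) (α β : Form F n) : inner' (c • α) β = c * inner' α β := by
  simp only [inner', Pi.smul_apply, smul_eq_mul, Finset.mul_sum, mul_assoc]

theorem inner'_comm (α β : Form F n) : inner' α β = inner' β α := by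
  simp only [inner', mul_comm]

theorem inner'_sum_left {ι : Type*} (t : Finset ι) (α : ι → Form F n) (β : Form F n) :
    inner' (∑ i ∈ t, α i) β = ∑ i ∈ t, inner' (α i) β := by
  simp only [inner', Finset.sum_apply, Finset.sum_mul]
  exact Finset.sum_comm

theorem inner'_hstar_left {k : ℕ} {α : Form F n} (hα : isGrade k α) (β : Form F n)
    (hk : Even (k * (n - k))) : inner' (hstar α) β = inner' α (hstar β) := by
  rw [inner', inner',
    ← (compl_involutive : Function.Involutive (compl : Finset (Fin n) → _)).bijective.sum_comp]
  refine Finset.sum_congr rfl fun s _ => ?_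
  by_cases hs : s.card = k
  · have hsign : (signMerge s sᶜ : F) = signMerge sᶜ s := by
      have hswap := signMerge_mul_signMerge_swap (F := F) (disjoint_compl_right (a := s))
      rw [Finset.card_compl, Fintype.card_fin, hs, hk.neg_one_pow] at hswap
      calc signMerge s sᶜ = signMerge s sᶜ * signMerge s sᶜ * signMerge sᶜ s := by
            rw [mul_assoc, hswap, mul_one]
        _ = signMerge sᶜ s := by rw [signMerge_mul_self, one_mul]
    simp only [hstar, compl_compl, hsign]
    ring
  · simp [hstar, hα s hs]

theorem sum_smul_eq_zero_iff_of_orthonormal {ι : Type*} [Fintype ι] [DecidableEq ι]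
    {e : ι → Form F n} (he : ∀ i j, inner' (e i) (e j) = if i = j then 1 else 0) (c : ι → F) :
    ∑ i, c i • e i = 0 ↔ ∀ i, c i = 0 := by
  refine ⟨fun h j => ?_, fun h => by simp [h]⟩
  have hj : inner' (∑ i, c i • e i) (e j) = c j := by
    simp [inner'_sum_left, inner'_smul_left, he]
  rw [← hj, h]
  simp [inner']

end InnerProduct

section IntegerForms

/-- The form with the given integer coefficients. Sign computations take place in `ℤ`, where
identities between coefficients are decidable. -/
def intForm (c : Finset (Fin n) → ℤ) : Form F n := fun s => (c s : F)

/-- Integer coefficients of `e^i ∧ β`. -/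
def e1WedgeCoeff (i : Fin n) (c : Finset (Fin n) → ℤ) (u : Finset (Fin n)) : ℤ :=
  if i ∈ u then (-1) ^ ((u.filter (· < i)).card) * c (u.erase i) else 0

/-- Integer coefficients of `i(e_i) β`. -/
def iprodCoeff (i : Fin n) (c : Finset (Fin n) → ℤ) (t : Finset (Fin n)) : ℤ :=
  if i ∈ t then 0 else (-1) ^ ((t.filter (· < i)).card) * c (insert i t)

/-- Integer coefficients of `*β`. -/
def hstarCoeff (c : Finset (Fin n) → ℤ) (t : Finset (Fin n)) : ℤ := mergeSign tᶜ t * c tᶜ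

theorem signMerge_singleton (i : Fin n) (t : Finset (Fin n)) :
    (signMerge {i} t : F) = (-1) ^ ((t.filter (· < i)).card) := by
  rw [signMerge, Finset.singleton_product, Finset.filter_map, Finset.card_map]
  rfl

theorem e1_wedge_intForm (i : Fin n) (c : Finset (Fin n) → ℤ) :
    wedge (e1 i) (intForm c : Form F n) = intForm (e1WedgeCoeff i c) := by
  funext u
  have hfilter : ({j ∈ u.erase i | j < i} : Finset (Fin n)) = {j ∈ u | j < i} := by
    grind
  simp only [e1_eq_single, single_one_wedge_apply, signMerge_singleton, hfilter,
    Finset.singleton_subset_iff, Finset.sdiff_singleton_eq_erase, intForm, e1WedgeCoeff]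
  push_cast
  rfl

theorem iprodB_intForm (i : Fin n) (c : Finset (Fin n) → ℤ) :
    iprodB i (intForm c : Form F n) = intForm (iprodCoeff i c) := by
  funext t
  simp only [iprodB, intForm, iprodCoeff]
  push_cast
  rfl

theorem hstar_intForm (c : Finset (Fin n) → ℤ) :
    hstar (intForm c : Form F n) = intForm (hstarCoeff c) := by
  funext t
  simp [hstar, intForm, hstarCoeff, intCast_mergeSign]

end IntegerForms

section G2

/-- Integer coefficients of `φ`. -/
def phiCoeff (s : Finset (Fin 8)) : ℤ :=
  if s ∈ ({{1, 2, 3}, {1, 4, 5}, {1, 6, 7}, {2, 4, 6}} : Finset (Finset (Fin 8))) then 1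
  else if s ∈ ({{2, 5, 7}, {3, 4, 7}, {3, 5, 6}} : Finset (Finset (Fin 8))) then -1
  else 0

/-- Integer coefficients of `*₇φ`. -/
def psiCoeff (s : Finset (Fin 8)) : ℤ :=
  if s ∈ ({{4, 5, 6, 7}, {2, 3, 6, 7}, {2, 3, 4, 5}, {1, 3, 5, 7}} : Finset (Finset (Fin 8))) then 1
  else if s ∈ ({{1, 3, 4, 6}, {1, 2, 5, 6}, {1, 2, 4, 7}} : Finset (Finset (Fin 8))) then -1
  else 0

theorem phi8_eq_intForm : (phi8 : Form F 8) = intForm phiCoeff := by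
  funext s
  simp only [phi8, intForm, phiCoeff, Finset.mem_insert, Finset.mem_singleton]
  push_cast
  simp only [ite_or]

theorem psi8_eq_intForm : (psi8 : Form F 8) = intForm psiCoeff := by
  funext s
  simp only [psi8, intForm, psiCoeff, Finset.mem_insert, Finset.mem_singleton]
  push_cast
  simp only [ite_or]

/-- Integer coefficients of `2 λ²(e^μ)`. -/
def lambda2Coeff (μ : Fin 8) : Finset (Fin 8) → ℤ :=
  e1WedgeCoeff 0 (Pi.single {μ} 1) + iprodCoeff μ phiCoeff

/-- Integer coefficients of `√8 λ⁴(e^μ)`. -/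
def lambda4Coeff (μ : Fin 8) : Finset (Fin 8) → ℤ :=
  e1WedgeCoeff 0 (iprodCoeff μ psiCoeff) - e1WedgeCoeff μ phiCoeff

/-- Integer coefficients of the Cayley form `Φ`. -/
def cayleyCoeff : Finset (Fin 8) → ℤ := e1WedgeCoeff 0 phiCoeff + psiCoeff

theorem lambda2_e1 (μ : Fin 8) :
    (lambda2 (e1 μ) : Form F 8) = (2 : F)⁻¹ • intForm (lambda2Coeff μ) := by
  have he1 : (e1 μ : Form F 8) = intForm (Pi.single {μ} 1) := by
    funext s
    simp [e1, intForm, Pi.single_apply]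
  rw [lambda2, iprod_sharp1_e1, phi8_eq_intForm, iprodB_intForm]
  rw [he1, e1_wedge_intForm]
  congr 1
  funext s
  simp [intForm, lambda2Coeff]

theorem lambda4_e1 (μ : Fin 8) :
    (lambda4 (e1 μ) : Form K 8) =
      (algebraMap ℝ K (Real.sqrt 8))⁻¹ • intForm (lambda4Coeff μ) := by
  rw [lambda4, iprod_sharp1_e1, phi8_eq_intForm, psi8_eq_intForm, iprodB_intForm,
    e1_wedge_intForm, e1_wedge_intForm]
  congr 1
  funext s
  simp [intForm, lambda4Coeff]

theorem Phi8_eq_intForm : (Phi8 : Form F 8) = intForm cayleyCoeff := by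
  rw [Phi8, phi8_eq_intForm, psi8_eq_intForm, e1_wedge_intForm]
  funext s
  simp [intForm, cayleyCoeff]

end G2

section Grade

theorem isGrade_add {k : ℕ} {α β : Form F n} (hα : isGrade k α) (hβ : isGrade k β) :
    isGrade k (α + β) := fun s hs => by
  rw [Pi.add_apply, hα s hs, hβ s hs, add_zero]

theorem isGrade_smul {k : ℕ} {α : Form F n} (hα : isGrade k α) (c : F) : isGrade k (c • α) :=
  fun s hs => by rw [Pi.smul_apply, hα s hs, smul_zero]

theorem isGrade_sum {ι : Type*} {t : Finset ι} {k : ℕ} {α : ι → Form F n}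
    (hα : ∀ i ∈ t, isGrade k (α i)) : isGrade k (∑ i ∈ t, α i) := fun s hs => by
  rw [Finset.sum_apply, Finset.sum_eq_zero fun i hi => hα i hi s hs]

theorem isGrade_e1 (i : Fin n) : isGrade 1 (e1 i : Form F n) := fun s hs => by
  rw [e1, if_neg]
  rintro rfl
  exact hs (Finset.card_singleton i)

theorem isGrade_wedge {j k : ℕ} {α β : Form F n} (hα : isGrade j α) (hβ : isGrade k β) :
    isGrade (j + k) (wedge α β) := fun u hu => by
  refine Finset.sum_eq_zero fun s hs => ?_
  have hcard := Finset.card_sdiff_add_card_eq_card (Finset.mem_powerset.1 hs)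
  by_cases hsj : s.card = j
  · rw [hβ (u \ s) (by lia), mul_zero]
  · rw [hα s hsj, mul_zero, zero_mul]

theorem isGrade_hstar {k : ℕ} {α : Form F n} (hα : isGrade k α) : isGrade (n - k) (hstar α) :=
  fun s hs => by
    have hcard := s.card_add_card_compl
    rw [Fintype.card_fin] at hcard
    rw [hstar, hα sᶜ (by lia), mul_zero]

theorem isGrade_iprodB {k : ℕ} {α : Form F n} (hα : isGrade (k + 1) α) (i : Fin n) :
    isGrade k (iprodB i α) := fun s hs => by
  rw [iprodB, ite_eq_left_iff]
  intro hi
  rw [hα _ (by rw [Finset.card_insert_of_notMem hi]; lia), mul_zero]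

theorem inner'_eq_sum_powersetCard {k : ℕ} {α : Form F n} (hα : isGrade k α) (β : Form F n) :
    inner' α β = ∑ s ∈ Finset.powersetCard k Finset.univ, α s * β s := by
  refine (Finset.sum_subset (Finset.subset_univ _) fun s _ hs => ?_).symm
  rw [hα s (by simpa [Finset.mem_powersetCard] using hs), zero_mul]

theorem isGrade_phi8 : isGrade 3 (phi8 : Form F 8) := fun s hs => by
  have hφ : ∀ s : Finset (Fin 8), s.card ≠ 3 → phiCoeff s = 0 := by decide +kernel
  rw [phi8_eq_intForm, intForm, hφ s hs, Int.cast_zero]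

theorem isGrade_psi8 : isGrade 4 (psi8 : Form F 8) := fun s hs => by
  have hψ : ∀ s : Finset (Fin 8), s.card ≠ 4 → psiCoeff s = 0 := by decide +kernel
  rw [psi8_eq_intForm, intForm, hψ s hs, Int.cast_zero]

theorem isGrade_Phi8 : isGrade 4 (Phi8 : Form F 8) :=
  isGrade_add (isGrade_wedge (isGrade_e1 0) isGrade_phi8) isGrade_psi8

theorem isGrade_lambda2 (i : Fin 8) : isGrade 2 (lambda2 (e1 i) : Form F 8) := by
  rw [lambda2, iprod_sharp1_e1]
  exact isGrade_smul
    (isGrade_add (isGrade_wedge (isGrade_e1 0) (isGrade_e1 i)) (isGrade_iprodB isGrade_phi8 i)) _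

theorem isGrade_lambda4 (i : Fin 8) : isGrade 4 (lambda4 (e1 i) : Form K 8) := by
  rw [lambda4, iprod_sharp1_e1, sub_eq_add_neg, ← neg_one_smul K (wedge (e1 i) phi8)]
  exact isGrade_smul (isGrade_add
    (isGrade_wedge (isGrade_e1 0) (isGrade_iprodB isGrade_psi8 i))
    (isGrade_smul (isGrade_wedge (isGrade_e1 i) isGrade_phi8) _)) _

end Grade

section Projections

theorem sum_lambda2Coeff_mul (μ ν : Fin 7) :
    ∑ s ∈ Finset.powersetCard 2 Finset.univ, lambda2Coeff μ.succ s * lambda2Coeff ν.succ s =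
      if μ = ν then 4 else 0 := by
  revert μ ν
  decide +kernel

theorem sum_lambda4Coeff_mul (μ ν : Fin 7) :
    ∑ s ∈ Finset.powersetCard 4 Finset.univ, lambda4Coeff μ.succ s * lambda4Coeff ν.succ s =
      if μ = ν then 8 else 0 := by
  revert μ ν
  decide +kernel

theorem inner'_smul_intForm {k : ℕ} {c : F} {a b : Finset (Fin n) → ℤ}
    (ha : isGrade k (c • intForm a : Form F n)) :
    inner' (c • intForm a : Form F n) (c • intForm b) =
      c * c * ((∑ s ∈ Finset.powersetCard k Finset.univ, a s * b s : ℤ) : F) := by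
  rw [inner'_eq_sum_powersetCard ha, Int.cast_sum, Finset.mul_sum]
  refine Finset.sum_congr rfl fun s _ => ?_
  simp only [Pi.smul_apply, intForm, smul_eq_mul, Int.cast_mul]
  ring

theorem inner'_lambda2_lambda2 [CharZero F] (μ ν : Fin 7) :
    inner' (lambda2 (e1 μ.succ) : Form F 8) (lambda2 (e1 ν.succ)) = if μ = ν then 1 else 0 := by
  have hgrade := isGrade_lambda2 (F := F) μ.succ
  rw [lambda2_e1] at hgrade
  rw [lambda2_e1, lambda2_e1, inner'_smul_intForm hgrade, sum_lambda2Coeff_mul]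
  split_ifs <;> norm_num

theorem inv_algebraMap_sqrt_eight_mul_self :
    (algebraMap ℝ K (Real.sqrt 8))⁻¹ * (algebraMap ℝ K (Real.sqrt 8))⁻¹ = (8 : K)⁻¹ := by
  rw [← mul_inv, ← map_mul, Real.mul_self_sqrt (by norm_num), map_ofNat]

theorem inner'_lambda4_lambda4 (μ ν : Fin 7) :
    inner' (lambda4 (e1 μ.succ) : Form K 8) (lambda4 (e1 ν.succ)) = if μ = ν then 1 else 0 := by
  have := Algebra.charZero_of_charZero ℝ K
  have hgrade := isGrade_lambda4 (K := K) μ.succ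
  rw [lambda4_e1] at hgrade
  rw [lambda4_e1, lambda4_e1, inner'_smul_intForm hgrade, sum_lambda4Coeff_mul,
    inv_algebraMap_sqrt_eight_mul_self]
  split_ifs <;> norm_num

/-- Integer matrix entry, in row `t` and column `s`, of the operator `α ↦ *₈(Φ ∧ α)`. -/
def starCayleyCoeff (t s : Finset (Fin 8)) : ℤ :=
  if s ⊆ tᶜ then mergeSign tᶜ t * (mergeSign (tᶜ \ s) s * cayleyCoeff (tᶜ \ s)) else 0

theorem hstar_Phi8_wedge_apply (α : Form F 8) (t : Finset (Fin 8)) :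
    hstar (wedge Phi8 α) t = ∑ s, (starCayleyCoeff t s : F) * α s := by
  simp only [hstar, wedge_apply_eq_sum, Phi8_eq_intForm, intForm, Finset.mul_sum]
  refine Finset.sum_congr rfl fun s _ => ?_
  simp only [starCayleyCoeff, ← intCast_mergeSign]
  split_ifs <;> push_cast <;> ring

theorem one_add_starCayleyCoeff : ∀ t ∈ Finset.powersetCard 2 Finset.univ,
    ∀ s ∈ Finset.powersetCard 2 Finset.univ, (if t = s then 1 else 0) + starCayleyCoeff t s =
      ∑ μ : Fin 7, lambda2Coeff μ.succ s * lambda2Coeff μ.succ t := by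
  decide +kernel

theorem isGrade_pi27 {α : Form F 8} (hα : isGrade 2 α) : isGrade 2 (pi27 α) :=
  isGrade_smul (isGrade_add hα (isGrade_hstar (isGrade_wedge isGrade_Phi8 hα))) _

theorem pi27_eq_sum {α : Form F 8} (hα : isGrade 2 α) :
    pi27 α = ∑ μ : Fin 7, inner' α (lambda2 (e1 μ.succ)) • lambda2 (e1 μ.succ) := by
  funext t
  by_cases ht : t.card = 2
  · calc pi27 α t
        = 4⁻¹ * ∑ s, (((if t = s then 1 else 0) + starCayleyCoeff t s : ℤ) : F) * α s := by
          simp [pi27, hstar_Phi8_wedge_apply, add_mul, Finset.sum_add_distrib]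
      _ = 4⁻¹ * ∑ s, (∑ μ : Fin 7, lambda2Coeff μ.succ s * lambda2Coeff μ.succ t : ℤ) * α s := by
          congr 1
          refine Finset.sum_congr rfl fun s _ => ?_
          by_cases hs : s.card = 2
          · rw [one_add_starCayleyCoeff t (by simpa [Finset.mem_powersetCard]) s
              (by simpa [Finset.mem_powersetCard])]
          · rw [hα s hs, mul_zero, mul_zero]
      _ = _ := by
          simp only [lambda2_e1, inner', intForm, Finset.sum_apply, Pi.smul_apply, smul_eq_mul,
            Int.cast_sum, Int.cast_mul, Finset.sum_mul, Finset.mul_sum]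
          rw [Finset.sum_comm]
          refine Finset.sum_congr rfl fun μ _ => Finset.sum_congr rfl fun s _ => ?_
          rw [show (4 : F) = 2 * 2 by norm_num, mul_inv]
          ring
  · rw [isGrade_pi27 hα t ht,
      isGrade_sum (fun μ _ => isGrade_smul (isGrade_lambda2 μ.succ) _) t ht]

theorem pi27_eq_zero_iff [CharZero F] {α : Form F 8} (hα : isGrade 2 α) :
    pi27 α = 0 ↔ ∀ μ : Fin 7, inner' α (lambda2 (e1 μ.succ)) = 0 := by
  rw [pi27_eq_sum hα, sum_smul_eq_zero_iff_of_orthonormal inner'_lambda2_lambda2]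

theorem pi47_eq_zero_iff (β : Form K 8) :
    pi47 β = 0 ↔ ∀ μ : Fin 7, inner' β (lambda4 (e1 μ.succ)) = 0 :=
  sum_smul_eq_zero_iff_of_orthonormal inner'_lambda4_lambda4 _

theorem tau4_eq_zero_iff (u : Fin 4 → Fin 8 → K) :
    tau4 u = 0 ↔ ∀ μ : Fin 7, evalForm (lambda4 (e1 μ.succ)) u = 0 :=
  sum_smul_eq_zero_iff_of_orthonormal inner'_lambda4_lambda4 _

end Projections

section Bidegree

/-- The multi-index of `dx^I ∧ dy^J` in `ℝ⁸ = ℝ⁴ × ℝ⁴`. -/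
def xyUnion (I J : Finset (Fin 4)) : Finset (Fin 8) := I.image xi ∪ J.image yi

/-- The indices of the `dx`-factors of a multi-index of `ℝ⁸ = ℝ⁴ × ℝ⁴`. -/
def xPart (s : Finset (Fin 8)) : Finset (Fin 4) := {j | xi j ∈ s}

/-- The indices of the `dy`-factors of a multi-index of `ℝ⁸ = ℝ⁴ × ℝ⁴`. -/
def yPart (s : Finset (Fin 8)) : Finset (Fin 4) := {a | yi a ∈ s}

theorem xi_lt_yi (i b : Fin 4) : xi i < yi b := by
  simp only [xi, yi, Fin.lt_def, Fin.val_castAdd, Fin.val_addNat]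
  lia

theorem xi_injective : Function.Injective xi := Fin.castAdd_injective 4 4

theorem yi_injective : Function.Injective yi := fun _ _ => (Fin.addNat_inj 4).1

theorem xi_lt_xi {i j : Fin 4} : xi i < xi j ↔ i < j := Iff.rfl

theorem yi_lt_yi {i j : Fin 4} : yi i < yi j ↔ i < j :=
  Fin.addNat_lt_addNat_iff 4

theorem exists_eq_xi_or_yi : ∀ k : Fin 8, ∃ j, k = xi j ∨ k = yi j := by
  decide

theorem xi_mem_xyUnion {i : Fin 4} {I J : Finset (Fin 4)} : xi i ∈ xyUnion I J ↔ i ∈ I := by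
  simp [xyUnion, xi_injective.eq_iff, (xi_lt_yi i _).ne']

theorem yi_mem_xyUnion {b : Fin 4} {I J : Finset (Fin 4)} : yi b ∈ xyUnion I J ↔ b ∈ J := by
  simp [xyUnion, yi_injective.eq_iff, (xi_lt_yi _ b).ne]

theorem xPart_xyUnion (I J : Finset (Fin 4)) : xPart (xyUnion I J) = I := by
  simp [xPart, xi_mem_xyUnion]

theorem yPart_xyUnion (I J : Finset (Fin 4)) : yPart (xyUnion I J) = J := by
  simp [yPart, yi_mem_xyUnion]

theorem xyUnion_xPart_yPart (s : Finset (Fin 8)) : xyUnion (xPart s) (yPart s) = s := by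
  ext k
  obtain ⟨j, rfl | rfl⟩ := exists_eq_xi_or_yi k
  · rw [xi_mem_xyUnion, xPart, Finset.mem_filter_univ]
  · rw [yi_mem_xyUnion, yPart, Finset.mem_filter_univ]

/-- Multi-indices of `ℝ⁸ = ℝ⁴ × ℝ⁴` split into their `dx`- and `dy`-parts. -/
def xyEquiv : Finset (Fin 4) × Finset (Fin 4) ≃ Finset (Fin 8) where
  toFun p := xyUnion p.1 p.2
  invFun s := (xPart s, yPart s)
  left_inv p := Prod.ext (xPart_xyUnion p.1 p.2) (yPart_xyUnion p.1 p.2)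
  right_inv := xyUnion_xPart_yPart

theorem sum_eq_sum_xyUnion {M : Type*} [AddCommMonoid M] (g : Finset (Fin 8) → M) :
    ∑ s, g s = ∑ I, ∑ J, g (xyUnion I J) := by
  rw [← xyEquiv.sum_comp, Fintype.sum_prod_type]
  rfl

theorem card_xyUnion (I J : Finset (Fin 4)) : (xyUnion I J).card = I.card + J.card := by
  rw [xyUnion, Finset.card_union_of_disjoint, Finset.card_image_of_injective _ xi_injective,
    Finset.card_image_of_injective _ yi_injective]
  simp [Finset.disjoint_left, (xi_lt_yi _ _).ne']

theorem xyUnion_sdiff_pair (I J : Finset (Fin 4)) (i b : Fin 4) :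
    xyUnion I J \ {xi i, yi b} = xyUnion (I.erase i) (J.erase b) := by
  ext k
  obtain ⟨j, rfl | rfl⟩ := exists_eq_xi_or_yi k
  · simp [xi_mem_xyUnion, xi_injective.eq_iff, (xi_lt_yi j b).ne, and_comm]
  · simp [yi_mem_xyUnion, yi_injective.eq_iff, (xi_lt_yi i j).ne', and_comm]

end Bidegree

section MixedForm

theorem signMerge_pair {i j : Fin n} (hij : i ≠ j) (t : Finset (Fin n)) :
    (signMerge {i, j} t : F) = (-1) ^ (t.filter (· < i)).card * (-1) ^ (t.filter (· < j)).card := by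
  rw [← signMerge_singleton, ← signMerge_singleton, signMerge, signMerge, signMerge, ← pow_add,
    Finset.insert_eq, Finset.union_product, Finset.filter_union, Finset.card_union_of_disjoint]
  exact Finset.disjoint_filter_filter
    (Finset.disjoint_product.2 (Or.inl (Finset.disjoint_singleton.2 hij)))

/-- The 2-form `∑ a_{jb} dx^j ∧ dy^b` on `ℝ⁸ = ℝ⁴ × ℝ⁴`. -/
def mixedForm (a : Matrix (Fin 4) (Fin 4) F) : Form F 8 :=
  ∑ j, ∑ b, a j b • wedge (e1 (xi j)) (e1 (yi b))

theorem filter_xyUnion_lt_xi (I J : Finset (Fin 4)) (i : Fin 4) :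
    (xyUnion I J).filter (· < xi i) = xyUnion (I.filter (· < i)) ∅ := by
  ext k
  obtain ⟨j, rfl | rfl⟩ := exists_eq_xi_or_yi k
  · rw [Finset.mem_filter, xi_mem_xyUnion, xi_mem_xyUnion, Finset.mem_filter, xi_lt_xi]
  · simp [yi_mem_xyUnion, (xi_lt_yi i j).le]

theorem filter_xyUnion_lt_yi (I J : Finset (Fin 4)) (b : Fin 4) :
    (xyUnion I J).filter (· < yi b) = xyUnion I (J.filter (· < b)) := by
  ext k
  obtain ⟨j, rfl | rfl⟩ := exists_eq_xi_or_yi k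
  · simp [xi_mem_xyUnion, xi_lt_yi]
  · rw [Finset.mem_filter, yi_mem_xyUnion, yi_mem_xyUnion, Finset.mem_filter, yi_lt_yi]

theorem signMerge_pair_xyUnion (I J : Finset (Fin 4)) (i b : Fin 4) :
    (signMerge {xi i, yi b} (xyUnion (I.erase i) (J.erase b)) : F) =
      (-1) ^ (I.erase i).card *
        ((-1) ^ (I.filter (· < i)).card * (-1) ^ (J.filter (· < b)).card) := by
  have herase (s : Finset (Fin 4)) (k : Fin 4) :
      (s.erase k).filter (· < k) = s.filter (· < k) := by grind
  rw [signMerge_pair (xi_lt_yi i b).ne, filter_xyUnion_lt_xi, filter_xyUnion_lt_yi,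
    card_xyUnion, card_xyUnion, herase, herase, Finset.card_empty, add_zero, pow_add]
  ring

theorem wedge_e1_xi_e1_yi (i b : Fin 4) :
    (wedge (e1 (xi i)) (e1 (yi b)) : Form F 8) = Pi.single {xi i, yi b} 1 := by
  have hlt := xi_lt_yi i b
  rw [e1_eq_single, e1_eq_single, single_wedge_single (Finset.disjoint_singleton.2 hlt.ne),
    signMerge_singleton, Finset.filter_singleton, if_neg hlt.not_gt, Finset.card_empty, pow_zero,
    Finset.insert_eq]

theorem wedge_mixedForm_xyUnion (a : Matrix (Fin 4) (Fin 4) F) (β : Form F 8)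
    (I J : Finset (Fin 4)) :
    wedge (mixedForm a) β (xyUnion I J) = ∑ i ∈ I, ∑ b ∈ J,
      (-1) ^ (I.erase i).card *
        ((-1) ^ ((I.filter (· < i)).card) * (-1) ^ ((J.filter (· < b)).card)) *
        a i b * β (xyUnion (I.erase i) (J.erase b)) := by
  have hsubset (i b : Fin 4) : {xi i, yi b} ⊆ xyUnion I J ↔ i ∈ I ∧ b ∈ J := by
    rw [Finset.insert_subset_iff, Finset.singleton_subset_iff, xi_mem_xyUnion, yi_mem_xyUnion]
  simp only [mixedForm, wedge_sum_left, wedge_smul_left, wedge_e1_xi_e1_yi, Finset.sum_apply,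
    Pi.smul_apply, single_one_wedge_apply, hsubset, xyUnion_sdiff_pair, signMerge_pair_xyUnion,
    smul_eq_mul]
  simp only [ite_and, mul_ite, mul_zero, Finset.sum_ite_irrel, Finset.sum_ite_mem,
    Finset.sum_const_zero, Finset.univ_inter]
  refine Finset.sum_congr rfl fun i _ => Finset.sum_congr rfl fun b _ => ?_
  ring

end MixedForm

section WedgePow

/-- The `q`-fold wedge power `γ^q`, with `γ^0 = 1`. -/
def wedgePow (γ : Form F n) : ℕ → Form F n
  | 0 => Pi.single ∅ 1
  | q + 1 => wedge γ (wedgePow γ q)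

theorem wedgePow_one (γ : Form F n) : wedgePow γ 1 = γ := wedge_single_empty γ

theorem isGrade_wedgePow {γ : Form F n} (hγ : isGrade 2 γ) (q : ℕ) :
    isGrade (2 * q) (wedgePow γ q) := by
  induction q with
  | zero =>
    intro s hs
    have hs' : s ≠ ∅ := by simpa using hs
    simp [wedgePow, hs']
  | succ q ih => rw [mul_add_one, add_comm]; exact isGrade_wedge hγ ih

theorem map_univ_erase {α : Type*} [LinearOrder α] {q : ℕ} (I : Fin (q + 1) ↪o α)
    (k : Fin (q + 1)) :
    (Finset.univ.map I.toEmbedding).erase (I k) =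
      Finset.univ.map (k.succAboveOrderEmb.trans I).toEmbedding := by
  ext i
  simp only [Finset.mem_erase, Finset.mem_map, Finset.mem_univ, true_and]
  constructor
  · rintro ⟨hi, j, rfl⟩
    obtain ⟨l, rfl⟩ := Fin.exists_succAbove_eq (fun h => hi (congrArg I h))
    exact ⟨l, rfl⟩
  · rintro ⟨l, rfl⟩
    exact ⟨fun h => k.succAbove_ne l (I.injective h), k.succAbove l, rfl⟩

theorem card_filter_map_univ_lt {α : Type*} [LinearOrder α] {q : ℕ} (I : Fin q ↪o α)
    (k : Fin q) :
    ((Finset.univ.map I.toEmbedding).filter (· < I k)).card = k := by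
  have hIio : Finset.univ.filter ((· < I k) ∘ I.toEmbedding) = Finset.Iio k := by
    ext
    simp
  rw [Finset.filter_map, Finset.card_map, hIio, Fin.card_Iio]

/-- Each of the `q + 1` row expansions of the determinant occurs once in `γ ∧ γ^q`, hence the
factorial. -/
theorem wedgePow_mixedForm_map (a : Matrix (Fin 4) (Fin 4) F) {q : ℕ} (I J : Fin q ↪o Fin 4) :
    wedgePow (mixedForm a) q
        (xyUnion (Finset.univ.map I.toEmbedding) (Finset.univ.map J.toEmbedding)) =
      q.factorial * (-1) ^ q.choose 2 * (a.submatrix I J).det := by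
  induction q with
  | zero => simp [wedgePow, xyUnion]
  | succ q ih =>
    calc _ = ∑ k : Fin (q + 1), ∑ l : Fin (q + 1),
          (-1) ^ q * ((-1) ^ (k : ℕ) * (-1) ^ (l : ℕ)) * a (I k) (J l) *
          (q.factorial * (-1) ^ q.choose 2 *
            ((a.submatrix I J).submatrix k.succAbove l.succAbove).det) := by
          rw [wedgePow, wedge_mixedForm_xyUnion]
          simp only [Finset.sum_map, RelEmbedding.coe_toEmbedding, map_univ_erase,
            card_filter_map_univ_lt, ih, Finset.card_map, Finset.card_univ, Fintype.card_fin]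
          rfl
      _ = ∑ _k : Fin (q + 1), (-1) ^ q * (q.factorial * (-1) ^ q.choose 2) *
          (a.submatrix I J).det := by
          refine Finset.sum_congr rfl fun k _ => ?_
          rw [Matrix.det_succ_row (a.submatrix I J) k, Finset.mul_sum]
          refine Finset.sum_congr rfl fun l _ => ?_
          rw [Matrix.submatrix_apply, pow_add]
          ring
      _ = _ := by
          rw [Finset.sum_const, Finset.card_univ, Fintype.card_fin, Nat.factorial_succ,
            Nat.choose_succ_succ, Nat.choose_one_right, nsmul_eq_mul, pow_add]
          push_cast
          ring

theorem wedgePow_mixedForm_eq_zero (a : Matrix (Fin 4) (Fin 4) F) {q : ℕ}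
    {I J : Finset (Fin 4)} (h : ¬(I.card = q ∧ J.card = q)) :
    wedgePow (mixedForm a) q (xyUnion I J) = 0 := by
  induction q generalizing I J with
  | zero =>
    rw [wedgePow, Pi.single_eq_of_ne]
    simpa [xyUnion, and_comm] using h
  | succ q ih =>
    rw [wedgePow, wedge_mixedForm_xyUnion]
    refine Finset.sum_eq_zero fun i hi => Finset.sum_eq_zero fun b hb => ?_
    rw [ih, mul_zero]
    have := Finset.card_erase_add_one hi
    have := Finset.card_erase_add_one hb
    lia

/-- The minor of `a` with rows `I` and columns `J`, with value `0` if `I` and `J` have different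
sizes. -/
def minor {R : Type*} [CommRing R] {p m : ℕ} (a : Matrix (Fin p) (Fin m) R) (I : Finset (Fin p))
    (J : Finset (Fin m)) : R :=
  if h : J.card = I.card then
    (a.submatrix (I.orderEmbOfFin rfl) (J.orderEmbOfFin h)).det
  else 0

theorem wedgePow_mixedForm_xyUnion (a : Matrix (Fin 4) (Fin 4) F) (q : ℕ)
    (I J : Finset (Fin 4)) :
    wedgePow (mixedForm a) q (xyUnion I J) =
      if I.card = q then q.factorial * (-1) ^ q.choose 2 * minor a I J else 0 := by
  split_ifs with hI
  · subst hI
    by_cases hJ : J.card = I.card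
    · have hmap := wedgePow_mixedForm_map a (I.orderEmbOfFin rfl) (J.orderEmbOfFin hJ)
      rw [Finset.map_orderEmbOfFin_univ, Finset.map_orderEmbOfFin_univ] at hmap
      rw [hmap, minor, dif_pos hJ]
    · rw [wedgePow_mixedForm_eq_zero a (by lia), minor, dif_neg hJ, mul_zero]
  · exact wedgePow_mixedForm_eq_zero a (by lia)

theorem sum_wedgePow_mixedForm_xyUnion [CharZero F] (a : Matrix (Fin 4) (Fin 4) F)
    (I J : Finset (Fin 4)) :
    (∑ q ∈ Finset.range 5, (q.factorial : F)⁻¹ • wedgePow (mixedForm a) q) (xyUnion I J) =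
      (-1) ^ I.card.choose 2 * minor a I J := by
  have hI : I.card ∈ Finset.range 5 := by
    simpa [Nat.lt_succ_iff] using I.card_le_univ
  simp only [Finset.sum_apply, Pi.smul_apply, wedgePow_mixedForm_xyUnion, smul_eq_mul, mul_ite,
    mul_zero, Finset.sum_ite_eq, hI, if_true]
  have hfactorial : (I.card.factorial : F) ≠ 0 := Nat.cast_ne_zero.2 I.card.factorial_ne_zero
  field_simp

end WedgePow

section Shuffle

/-- The identification of positions `0, …, n - 1` with the elements of `I` followed by those of
`Iᶜ`. -/
def shufflePositions (I : Finset (Fin n)) : Fin I.card ⊕ Fin Iᶜ.card ≃ Fin n :=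
  finSumFinEquiv.trans (finCongr (by rw [Finset.card_add_card_compl, Fintype.card_fin]))

/-- The permutation listing the elements of `I` in order and then those of `Iᶜ` in order. -/
def shufflePerm (I : Finset (Fin n)) : Equiv.Perm (Fin n) :=
  (shufflePositions I).symm.trans (finSumEquivOfFinset rfl rfl)

theorem shufflePerm_inl (I : Finset (Fin n)) (k : Fin I.card) :
    shufflePerm I (shufflePositions I (Sum.inl k)) = I.orderEmbOfFin rfl k := by
  simp [shufflePerm]

theorem shufflePerm_inr (I : Finset (Fin n)) (k : Fin Iᶜ.card) :
    shufflePerm I (shufflePositions I (Sum.inr k)) = Iᶜ.orderEmbOfFin rfl k := by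
  simp [shufflePerm]

theorem shufflePositions_lt_iff (I : Finset (Fin n)) (x y : Fin I.card ⊕ Fin Iᶜ.card) :
    shufflePositions I x < shufflePositions I y ↔ toLex x < toLex y := by
  have hlt (k : Fin I.card) (l : Fin Iᶜ.card) : Fin.castAdd _ k < Fin.natAdd I.card l :=
    k.isLt.trans_le (Nat.le_add_right _ _)
  rcases x with k | k <;> rcases y with l | l <;>
    simp only [shufflePositions, Equiv.trans_apply, finSumFinEquiv_apply_left,
      finSumFinEquiv_apply_right, finCongr_apply, Fin.cast_lt_cast, Sum.Lex.inl_lt_inl_iff,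
      Sum.Lex.inr_lt_inr_iff, Sum.Lex.inl_lt_inr, Sum.Lex.not_inr_lt_inl, iff_true, iff_false,
      Fin.natAdd_lt_natAdd_iff, not_lt]
  · rfl
  · exact hlt k l
  · exact (hlt l k).le

theorem prod_orderEmbOfFin {M : Type*} [CommMonoid M] (s : Finset (Fin n)) (g : Fin n → M) :
    ∏ k, g (s.orderEmbOfFin rfl k) = ∏ i ∈ s, g i := by
  conv_rhs => rw [← s.map_orderEmbOfFin_univ rfl, Finset.prod_map]
  rfl

theorem prod_product_ite_lt (s t : Finset (Fin n)) :
    ∏ i ∈ s, ∏ j ∈ t, (if j < i then -1 else 1) = mergeSign s t := by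
  rw [← Finset.prod_product', Finset.prod_ite, Finset.prod_const, Finset.prod_const_one, mul_one,
    mergeSign]

theorem sign_eq_prod_inversions (σ : Equiv.Perm (Fin n)) :
    (σ.sign : ℤ) = ∏ i, ∏ j, if i < j ∧ σ j < σ i then -1 else 1 := by
  rw [Equiv.Perm.sign_eq_prod_prod_Ioi]
  simp only [Units.coe_prod]
  refine Finset.prod_congr rfl fun i _ => ?_
  rw [← Finset.filter_lt_eq_Ioi, Finset.prod_filter]
  refine Finset.prod_congr rfl fun j _ => ?_
  rcases lt_trichotomy (σ i) (σ j) with h | h | h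
  · simp [h, h.not_gt]
  · simp [σ.injective h]
  · simp [h, h.not_gt]

/-- The inversions of the shuffle are the pairs counted by `mergeSign`. -/
theorem sign_shufflePerm (I : Finset (Fin n)) :
    ((shufflePerm I).sign : ℤ) = mergeSign I Iᶜ := by
  calc ((shufflePerm I).sign : ℤ)
      = ∏ i, ∏ j, if i < j ∧ shufflePerm I j < shufflePerm I i then -1 else 1 :=
        sign_eq_prod_inversions _
    _ = ∏ k, ∏ l, if Iᶜ.orderEmbOfFin rfl l < I.orderEmbOfFin rfl k then -1 else 1 := by
        have hasymm {m : ℕ} (k l : Fin m) : ¬(k < l ∧ l < k) := fun h => h.1.asymm h.2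
        rw [← (shufflePositions I).prod_comp]
        simp only [← (shufflePositions I).prod_comp (fun _ => ite _ _ _), Fintype.prod_sum_type,
          shufflePerm_inl, shufflePerm_inr, shufflePositions_lt_iff, Sum.Lex.inl_lt_inl_iff,
          Sum.Lex.inr_lt_inr_iff, Sum.Lex.inl_lt_inr, Sum.Lex.not_inr_lt_inl,
          OrderEmbedding.lt_iff_lt, hasymm, true_and, false_and, if_false, Finset.prod_const_one,
          one_mul, mul_one]
    _ = ∏ i ∈ I, ∏ j ∈ Iᶜ, if j < i then -1 else 1 := by
        rw [← prod_orderEmbOfFin I]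
        exact Finset.prod_congr rfl fun k _ =>
          prod_orderEmbOfFin Iᶜ fun j => if j < I.orderEmbOfFin rfl k then -1 else 1
    _ = mergeSign I Iᶜ := prod_product_ite_lt I Iᶜ

end Shuffle

section GraphFrame

/-- The tangent frame `∂_{x^j} + ∑ a_{jb} ∂_{y^b}` of the graph of a map with derivative `a`. -/
def graphFrame (a : Matrix (Fin 4) (Fin 4) F) (j : Fin 4) : Fin 8 → F :=
  Pi.single (xi j) 1 + ∑ b, a j b • Pi.single (yi b) 1

theorem graphFrame_xi (a : Matrix (Fin 4) (Fin 4) F) (j i : Fin 4) :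
    graphFrame a j (xi i) = (1 : Matrix (Fin 4) (Fin 4) F) j i := by
  simp [graphFrame, Pi.single_apply, (xi_lt_yi i _).ne, xi_injective.eq_iff, Matrix.one_apply,
    eq_comm]

theorem graphFrame_yi (a : Matrix (Fin 4) (Fin 4) F) (j b : Fin 4) :
    graphFrame a j (yi b) = a j b := by
  simp [graphFrame, Pi.single_apply, (xi_lt_yi j b).ne', yi_injective.eq_iff]

theorem orderEmbOfFin_xyUnion {I J : Finset (Fin 4)} (h : (xyUnion I J).card = 4)
    (hJ : J.card = Iᶜ.card) (x : Fin I.card ⊕ Fin Iᶜ.card) :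
    (xyUnion I J).orderEmbOfFin h (shufflePositions I x) =
      Sum.elim (fun k => xi (I.orderEmbOfFin rfl k)) (fun l => yi (J.orderEmbOfFin hJ l)) x := by
  set e := Sum.elim (fun k => xi (I.orderEmbOfFin rfl k)) (fun l => yi (J.orderEmbOfFin hJ l))
  have hmem (p : Fin 4) : e ((shufflePositions I).symm p) ∈ xyUnion I J := by
    rcases (shufflePositions I).symm p with k | l
    · exact xi_mem_xyUnion.2 (I.orderEmbOfFin_mem rfl k)
    · exact yi_mem_xyUnion.2 (J.orderEmbOfFin_mem hJ l)
  have hmono : StrictMono fun p => e ((shufflePositions I).symm p) := by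
    intro p q hpq
    obtain ⟨x, rfl⟩ := (shufflePositions I).surjective p
    obtain ⟨y, rfl⟩ := (shufflePositions I).surjective q
    rw [shufflePositions_lt_iff] at hpq
    simp only [Equiv.symm_apply_apply]
    rcases x with k | k <;> rcases y with l | l
    · simpa [e, xi_lt_xi] using hpq
    · exact xi_lt_yi _ _
    · simp at hpq
    · simpa [e, yi_lt_yi] using hpq
  rw [← Finset.orderEmbOfFin_unique h hmem hmono]
  exact congrArg e ((shufflePositions I).symm_apply_apply x)

theorem det_graphFrame_xyUnion (a : Matrix (Fin 4) (Fin 4) F) {I J : Finset (Fin 4)}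
    (h : (xyUnion I J).card = 4) :
    (Matrix.of fun i j => graphFrame a i ((xyUnion I J).orderIsoOfFin h j)).det =
      signMerge I Iᶜ * minor a Iᶜ J := by
  have hJ : J.card = Iᶜ.card := by
    rw [card_xyUnion] at h
    rw [Finset.card_compl, Fintype.card_fin]
    lia
  set G : Matrix (Fin 4) (Fin 4) F :=
    Matrix.of fun i j => graphFrame a i ((xyUnion I J).orderIsoOfFin h j)
  have hblocks : (G.submatrix (shufflePerm I) id).submatrix (shufflePositions I)
      (shufflePositions I) = Matrix.fromBlocks 1
        (a.submatrix (I.orderEmbOfFin rfl) (J.orderEmbOfFin hJ)) 0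
        (a.submatrix (Iᶜ.orderEmbOfFin rfl) (J.orderEmbOfFin hJ)) := by
    have hne (k : Fin Iᶜ.card) (l : Fin I.card) :
        Iᶜ.orderEmbOfFin rfl k ≠ I.orderEmbOfFin rfl l := fun hkl =>
      Finset.mem_compl.1 (Iᶜ.orderEmbOfFin_mem rfl k) (hkl ▸ I.orderEmbOfFin_mem rfl l)
    ext x y
    rcases x with k | k <;> rcases y with l | l <;>
      simp [G, orderEmbOfFin_xyUnion h hJ, shufflePerm_inl, shufflePerm_inr, graphFrame_xi,
        graphFrame_yi, Matrix.one_apply, hne]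
  have hsign : (((shufflePerm I).sign : ℤ) : F) * (((shufflePerm I).sign : ℤ) : F) = 1 := by
    rw [sign_shufflePerm, intCast_mergeSign, signMerge_mul_self]
  calc G.det = ((shufflePerm I).sign : ℤ) * (((shufflePerm I).sign : ℤ) * G.det) := by
        rw [← mul_assoc, hsign, one_mul]
    _ = ((shufflePerm I).sign : ℤ) *
          (a.submatrix (Iᶜ.orderEmbOfFin rfl) (J.orderEmbOfFin hJ)).det := by
        rw [← Matrix.det_permute, ← Matrix.det_submatrix_equiv_self (shufflePositions I), hblocks,
          Matrix.det_fromBlocks_zero₂₁, Matrix.det_one, one_mul]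
    _ = signMerge I Iᶜ * minor a Iᶜ J := by
        rw [sign_shufflePerm, intCast_mergeSign, minor, dif_pos hJ]

end GraphFrame

section FourierMukai

/-- The multi-index obtained by complementing the `dx`-part. -/
def xCompl (s : Finset (Fin 8)) : Finset (Fin 8) := xyUnion (xPart s)ᶜ (yPart s)

/-- The sign in the Fourier–Mukai transform of the basis form with index `xCompl s`. Its second
factor is the sign with which minors of `a` occur as coefficients of `exp γ`. -/
def fourierMukaiSign (s : Finset (Fin 8)) : ℤ :=
  mergeSign (xPart s)ᶜ (xPart s) * (-1) ^ (xPart s).card.choose 2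

/-- The Fourier–Mukai transform of a constant form, a Hodge star along the factor `ℝ⁴` of the
`dx`-directions. The sign is chosen so that evaluation on a graph becomes pairing with `exp γ`. -/
def fourierMukai (α : Form F 8) : Form F 8 := fun s => fourierMukaiSign s * α (xCompl s)

theorem evalForm_graphFrame_eq_sum (a : Matrix (Fin 4) (Fin 4) F) (α : Form F 8) :
    evalForm α (graphFrame a) =
      ∑ I, ∑ J, α (xyUnion I J) * (signMerge I Iᶜ * minor a Iᶜ J) := by
  rw [evalForm, sum_eq_sum_xyUnion]
  refine Finset.sum_congr rfl fun I _ => Finset.sum_congr rfl fun J _ => ?_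
  congr 1
  split_ifs with h
  · exact det_graphFrame_xyUnion a h
  · have hJ : J.card ≠ Iᶜ.card := by
      have hI := I.card_add_card_compl
      rw [Fintype.card_fin] at hI
      rw [card_xyUnion] at h
      lia
    rw [minor, dif_neg hJ, mul_zero]

theorem evalForm_graphFrame [CharZero F] (a : Matrix (Fin 4) (Fin 4) F) (α : Form F 8) :
    evalForm α (graphFrame a) = inner' (fourierMukai α)
      (∑ q ∈ Finset.range 5, (q.factorial : F)⁻¹ • wedgePow (mixedForm a) q) := by
  rw [evalForm_graphFrame_eq_sum, inner', sum_eq_sum_xyUnion,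
    ← (compl_involutive : Function.Involutive (compl : Finset (Fin 4) → _)).bijective.sum_comp]
  refine Finset.sum_congr rfl fun I _ => Finset.sum_congr rfl fun J _ => ?_
  have hsq : ((-1) ^ I.card.choose 2 * (-1) ^ I.card.choose 2 : F) = 1 := by
    rw [← pow_add, Even.neg_one_pow ⟨_, rfl⟩]
  rw [sum_wedgePow_mixedForm_xyUnion, fourierMukai, fourierMukaiSign, xCompl, xPart_xyUnion,
    yPart_xyUnion, compl_compl, Int.cast_mul, intCast_mergeSign]
  push_cast
  linear_combination (-(α (xyUnion Iᶜ J) * signMerge Iᶜ I * minor a I J)) * hsq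

theorem fourierMukai_smul (c : F) (α : Form F 8) : fourierMukai (c • α) = c • fourierMukai α := by
  funext s
  simp only [fourierMukai, Pi.smul_apply, smul_eq_mul]
  ring

theorem fourierMukaiSign_mul_lambda4Coeff_xi : ∀ (j : Fin 3) (s : Finset (Fin 8)),
    fourierMukaiSign s * lambda4Coeff (xi j.succ) (xCompl s) = -lambda4Coeff (xi j.succ) s := by
  decide +kernel

theorem fourierMukaiSign_mul_lambda4Coeff_yi : ∀ (b : Fin 4) (s : Finset (Fin 8)),
    fourierMukaiSign s * lambda4Coeff (yi b) (xCompl s) =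
      -(lambda2Coeff (yi b) s - hstarCoeff (lambda2Coeff (yi b)) s) := by
  decide +kernel

theorem fourierMukai_lambda4_xi (j : Fin 3) :
    fourierMukai (lambda4 (e1 (xi j.succ)) : Form K 8) = -lambda4 (e1 (xi j.succ)) := by
  rw [lambda4_e1, fourierMukai_smul, ← smul_neg]
  congr 1
  funext s
  rw [fourierMukai, intForm, ← Int.cast_mul, fourierMukaiSign_mul_lambda4Coeff_xi, Int.cast_neg]
  rfl

theorem fourierMukai_lambda4_yi (b : Fin 4) :
    fourierMukai (lambda4 (e1 (yi b)) : Form K 8) = (-2 * (algebraMap ℝ K (Real.sqrt 8))⁻¹) •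
      (lambda2 (e1 (yi b)) + (-1 : K) • hstar (lambda2 (e1 (yi b)))) := by
  have := Algebra.charZero_of_charZero ℝ K
  rw [lambda4_e1, fourierMukai_smul, lambda2_e1, hstar_smul, hstar_intForm]
  funext s
  simp only [Pi.smul_apply, Pi.add_apply, fourierMukai, intForm, ← Int.cast_mul,
    fourierMukaiSign_mul_lambda4Coeff_yi]
  push_cast
  simp only [smul_eq_mul]
  ring

end FourierMukai

section Pairing

theorem inner'_eq_zero_of_isGrade {k l : ℕ} {α β : Form F n} (hα : isGrade k α)
    (hβ : isGrade l β) (hkl : k ≠ l) : inner' α β = 0 := by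
  refine Finset.sum_eq_zero fun s _ => ?_
  by_cases hs : s.card = k
  · rw [hβ s (hs.trans_ne hkl), mul_zero]
  · rw [hα s hs, zero_mul]

theorem inner'_sum_wedgePow {γ α : Form F n} (hγ : isGrade 2 γ) {q N : ℕ}
    (hα : isGrade (2 * q) α) (hq : q < N) :
    inner' α (∑ p ∈ Finset.range N, (p.factorial : F)⁻¹ • wedgePow γ p) =
      (q.factorial : F)⁻¹ * inner' (wedgePow γ q) α := by
  rw [inner'_comm, inner'_sum_left, Finset.sum_eq_single_of_mem q (Finset.mem_range.2 hq),
    inner'_smul_left]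
  intro p _ hpq
  rw [inner'_smul_left, inner'_eq_zero_of_isGrade (isGrade_wedgePow hγ p) hα (by lia), mul_zero]

theorem isGrade_mixedForm (a : Matrix (Fin 4) (Fin 4) F) : isGrade 2 (mixedForm a) :=
  isGrade_sum fun _ _ => isGrade_sum fun _ _ =>
    isGrade_smul (isGrade_wedge (isGrade_e1 _) (isGrade_e1 _)) _

theorem inner'_wedgePow_mixedForm_eq_zero (a : Matrix (Fin 4) (Fin 4) F) {q : ℕ} {β : Form F 8}
    (hβ : ∀ s, (xPart s).card = q → (yPart s).card = q → β s = 0) :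
    inner' (wedgePow (mixedForm a) q) β = 0 := by
  refine Finset.sum_eq_zero fun s _ => ?_
  by_cases hs : (xPart s).card = q ∧ (yPart s).card = q
  · rw [hβ s hs.1 hs.2, mul_zero]
  · rw [← xyUnion_xPart_yPart s, wedgePow_mixedForm_eq_zero a hs, zero_mul]

/-- The 2-form `γ - *γ³/6`; if `F = √-1 γ` then `√-1 (γ - *γ³/6) = F + *F³/6`. -/
def deformedForm (γ : Form F 8) : Form F 8 := γ + (-6 : F)⁻¹ • hstar (wedgePow γ 3)

theorem isGrade_deformedForm {γ : Form F 8} (hγ : isGrade 2 γ) : isGrade 2 (deformedForm γ) :=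
  isGrade_add hγ (isGrade_smul (isGrade_hstar (isGrade_wedgePow hγ 3)) _)

theorem inner'_deformedForm {γ β : Form F 8} (hγ : isGrade 2 γ) :
    inner' (deformedForm γ) β =
      inner' γ β + (-6 : F)⁻¹ * inner' (wedgePow γ 3) (hstar β) := by
  rw [deformedForm, inner'_add_left, inner'_smul_left,
    inner'_hstar_left (isGrade_wedgePow hγ 3) β (by decide)]

theorem evalForm_lambda4_xi (a : Matrix (Fin 4) (Fin 4) K) (j : Fin 3) :
    evalForm (lambda4 (e1 (xi j.succ))) (graphFrame a) =
      -(2 : K)⁻¹ * inner' (wedgePow (mixedForm a) 2) (lambda4 (e1 (xi j.succ))) := by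
  have := Algebra.charZero_of_charZero ℝ K
  rw [evalForm_graphFrame, fourierMukai_lambda4_xi, ← neg_one_smul K, inner'_smul_left,
    inner'_sum_wedgePow (isGrade_mixedForm a) (q := 2) (isGrade_lambda4 _) (by decide)]
  norm_num

theorem evalForm_lambda4_yi (a : Matrix (Fin 4) (Fin 4) K) (b : Fin 4) :
    evalForm (lambda4 (e1 (yi b))) (graphFrame a) =
      -2 * (algebraMap ℝ K (Real.sqrt 8))⁻¹ *
        inner' (deformedForm (mixedForm a)) (lambda2 (e1 (yi b))) := by
  have := Algebra.charZero_of_charZero ℝ K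
  have hγ := isGrade_mixedForm a
  rw [evalForm_graphFrame, fourierMukai_lambda4_yi, inner'_smul_left, inner'_add_left,
    inner'_smul_left,
    inner'_sum_wedgePow hγ (q := 1) (isGrade_lambda2 _) (by decide),
    inner'_sum_wedgePow hγ (q := 3) (isGrade_hstar (isGrade_lambda2 _)) (by decide),
    wedgePow_one, inner'_deformedForm hγ]
  norm_num [Nat.factorial]

theorem lambda4Coeff_yi_eq_zero : ∀ (b : Fin 4) (s : Finset (Fin 8)),
    (xPart s).card = 2 → (yPart s).card = 2 → lambda4Coeff (yi b) s = 0 := by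
  decide +kernel

theorem lambda2Coeff_xi_eq_zero : ∀ (j : Fin 3) (s : Finset (Fin 8)),
    (xPart s).card = 1 → (yPart s).card = 1 → lambda2Coeff (xi j.succ) s = 0 := by
  decide +kernel

theorem xPart_compl (s : Finset (Fin 8)) : xPart sᶜ = (xPart s)ᶜ := by
  ext
  simp [xPart]

theorem yPart_compl (s : Finset (Fin 8)) : yPart sᶜ = (yPart s)ᶜ := by
  ext
  simp [yPart]

theorem inner'_wedgePow_two_lambda4_yi (a : Matrix (Fin 4) (Fin 4) K) (b : Fin 4) :
    inner' (wedgePow (mixedForm a) 2) (lambda4 (e1 (yi b))) = 0 :=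
  inner'_wedgePow_mixedForm_eq_zero a fun s hx hy => by
    simp [lambda4_e1, intForm, lambda4Coeff_yi_eq_zero b s hx hy]

theorem inner'_deformedForm_lambda2_xi (a : Matrix (Fin 4) (Fin 4) F) (j : Fin 3) :
    inner' (deformedForm (mixedForm a)) (lambda2 (e1 (xi j.succ))) = 0 := by
  have hlambda2 (s : Finset (Fin 8)) (hx : (xPart s).card = 1) (hy : (yPart s).card = 1) :
      (lambda2 (e1 (xi j.succ)) : Form F 8) s = 0 := by
    simp [lambda2_e1, intForm, lambda2Coeff_xi_eq_zero j s hx hy]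
  have hlinear := inner'_wedgePow_mixedForm_eq_zero a hlambda2
  have hcubic := inner'_wedgePow_mixedForm_eq_zero a (q := 3)
    (β := hstar (lambda2 (e1 (xi j.succ)))) fun s hx hy => by
      rw [hstar, hlambda2 sᶜ (by rw [xPart_compl, Finset.card_compl, hx, Fintype.card_fin])
        (by rw [yPart_compl, Finset.card_compl, hy, Fintype.card_fin]), mul_zero]
  rw [wedgePow_one] at hlinear
  rw [inner'_deformedForm (isGrade_mixedForm a), hlinear, hcubic, mul_zero, add_zero]

theorem forall_succ_iff_xi_yi (p : Fin 8 → Prop) :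
    (∀ μ : Fin 7, p μ.succ) ↔ (∀ j : Fin 3, p (xi j.succ)) ∧ ∀ b, p (yi b) := by
  simp [Fin.forall_fin_succ, xi, yi, and_assoc]

theorem tau4_graphFrame_eq_zero_iff (a : Matrix (Fin 4) (Fin 4) K) :
    tau4 (graphFrame a) = 0 ↔
      pi27 (deformedForm (mixedForm a)) = 0 ∧ pi47 (wedgePow (mixedForm a) 2) = 0 := by
  have := Algebra.charZero_of_charZero ℝ K
  have hsqrt : algebraMap ℝ K (Real.sqrt 8) ≠ 0 := by simp
  rw [tau4_eq_zero_iff, pi27_eq_zero_iff (isGrade_deformedForm (isGrade_mixedForm a)),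
    pi47_eq_zero_iff, forall_succ_iff_xi_yi (fun k => evalForm (lambda4 (e1 k)) (graphFrame a) = 0),
    forall_succ_iff_xi_yi (fun k => inner' _ (lambda2 (e1 k)) = 0),
    forall_succ_iff_xi_yi (fun k => inner' _ (lambda4 (e1 k)) = 0)]
  simp only [evalForm_lambda4_xi, evalForm_lambda4_yi, inner'_wedgePow_two_lambda4_yi,
    inner'_deformedForm_lambda2_xi, mul_eq_zero, neg_eq_zero, inv_eq_zero, OfNat.ofNat_ne_zero,
    hsqrt, false_or, implies_true, true_and, and_comm]

end Pairing

section Curvature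

theorem pi27_smul (c : F) (α : Form F 8) : pi27 (c • α) = c • pi27 α := by
  rw [pi27, pi27, wedge_smul_right, hstar_smul, ← smul_add, smul_comm]

theorem pi47_smul (c : K) (β : Form K 8) : pi47 (c • β) = c • pi47 β := by
  simp only [pi47, inner'_smul_left, mul_smul, Finset.smul_sum]

theorem smul_deformedForm {i : F} (hi : i * i = -1) (γ : Form F 8) :
    i • deformedForm γ =
      i • γ + (6 : F)⁻¹ • hstar (wedge (i • γ) (wedge (i • γ) (i • γ))) := by
  have hcube : wedge (i • γ) (wedge (i • γ) (i • γ)) = (-i) • wedgePow γ 3 := by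
    simp only [wedgePow, wedge_single_empty, wedge_smul_left, wedge_smul_right, smul_smul]
    rw [mul_assoc, hi, mul_neg_one]
  rw [hcube, deformedForm, hstar_smul, smul_add, smul_smul, smul_smul]
  congr 2
  rw [inv_neg]
  ring

theorem smul_wedge_smul {i : F} (hi : i * i = -1) (γ : Form F 8) :
    wedge (i • γ) (i • γ) = (-1 : F) • wedgePow γ 2 := by
  rw [wedge_smul_left, wedge_smul_right, smul_smul, hi, wedgePow, wedgePow_one]

theorem tau4_graphFrame_eq_zero_iff_curvature {i : K} (hi : i * i = -1)
    (a : Matrix (Fin 4) (Fin 4) K) {γ : Form K 8} (hγ : γ = i • mixedForm a) :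
    tau4 (graphFrame a) = 0 ↔
      pi27 (γ + (6 : K)⁻¹ • hstar (wedge γ (wedge γ γ))) = 0 ∧ pi47 (wedge γ γ) = 0 := by
  have hi0 : i ≠ 0 := by
    rintro rfl
    simp at hi
  rw [hγ, ← smul_deformedForm hi, smul_wedge_smul hi, pi27_smul, pi47_smul,
    smul_eq_zero_iff_right hi0, smul_eq_zero_iff_right (neg_ne_zero.2 one_ne_zero),
    tau4_graphFrame_eq_zero_iff]

theorem lambda4_e1_apply (i : Fin 8) (s : Finset (Fin 8)) :
    (lambda4 (e1 i) : Form K 8) s = algebraMap ℝ K (lambda4 (e1 i) s) := by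
  simp [lambda4_e1, intForm]

theorem evalForm_lambda4_map {k : ℕ} (i : Fin 8) (u : Fin k → Fin 8 → ℝ) :
    evalForm (lambda4 (e1 i) : Form K 8) (fun j m => algebraMap ℝ K (u j m)) =
      algebraMap ℝ K (evalForm (lambda4 (e1 i)) u) := by
  simp only [evalForm, map_sum, map_mul, lambda4_e1_apply (K := K), apply_dite (algebraMap ℝ K),
    map_zero, RingHom.map_det]
  rfl

theorem tau4_map_eq_zero_iff (u : Fin 4 → Fin 8 → ℝ) :
    tau4 (fun j m => algebraMap ℝ K (u j m)) = 0 ↔ tau4 u = 0 := by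
  simp only [tau4_eq_zero_iff, evalForm_lambda4_map, map_eq_zero]

theorem graphFrame_map (a : Matrix (Fin 4) (Fin 4) ℝ) :
    graphFrame (a.map (algebraMap ℝ K)) = fun j m => algebraMap ℝ K (graphFrame a j m) := by
  funext j k
  obtain ⟨i, rfl | rfl⟩ := exists_eq_xi_or_yi k
  · simp [graphFrame_xi, Matrix.one_apply, apply_ite (algebraMap ℝ K)]
  · simp [graphFrame_yi]

theorem mixedForm_map_apply (a : Matrix (Fin 4) (Fin 4) ℝ) (s : Finset (Fin 8)) :
    mixedForm (a.map (algebraMap ℝ K)) s = algebraMap ℝ K (mixedForm a s) := by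
  simp [mixedForm, wedge_e1_xi_e1_yi, Pi.single_apply, apply_ite (algebraMap ℝ K),
    Algebra.algebraMap_eq_smul_one]

theorem FS8_eq_smul_mixedForm (f : (Fin 4 → ℝ) → (Fin 4 → ℝ)) (x : Fin 4 → ℝ) :
    FS8 f x = Complex.I • mixedForm (Matrix.map (pd f x) Complex.ofReal) := by
  funext s
  exact congrArg (Complex.I * ·) (mixedForm_map_apply (K := ℂ) (pd f x) s).symm

end Curvature

theorem statement0_general (a : Matrix (Fin 4) (Fin 4) ℝ) {ω : Form ℂ 8}
    (hω : ω = Complex.I • mixedForm (a.map Complex.ofReal)) :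
    tau4 (graphFrame a) = 0 ↔
      pi27 (ω + (6 : ℂ)⁻¹ • hstar (wedge ω (wedge ω ω))) = 0 ∧ pi47 (wedge ω ω) = 0 := by
  rw [← tau4_map_eq_zero_iff (K := ℂ), ← graphFrame_map]
  exact tau4_graphFrame_eq_zero_iff_curvature Complex.I_mul_I _ hω

/-- Theorem 1.1 / Theorem 5.1.  The graph `S` of `f : B → T⁴` is a Cayley
submanifold with an appropriate orientation (i.e. `τ(v₀,v₁,v₂,v₃) = 0` on `B`) if and only if
`π²₇(F_∇^S + (1/6) *₈ (F_∇^S)³) = 0` and `π⁴₇((F_∇^S)²) = 0` on `B`. -/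
theorem statement0 (B : Set (Fin 4 → ℝ)) (hB : IsOpen B)
    (f : (Fin 4 → ℝ) → (Fin 4 → ℝ)) (hf : ContDiffOn ℝ (⊤ : ℕ∞) f B) :
    (∀ x ∈ B, tau4 (fun j => vG f x j) = 0) ↔
      (∀ x ∈ B,
        pi27 (FS8 f x + (6 : ℂ)⁻¹ •
          hstar (wedge (FS8 f x) (wedge (FS8 f x) (FS8 f x)))) = 0 ∧
        pi47 (wedge (FS8 f x) (FS8 f x)) = 0) :=
  forall₂_congr fun x _ => statement0_general (pd f x) (FS8_eq_smul_mixedForm f x)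

end FMpaper
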